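/- arXiv:2205.05837 — 2 statements merged into one kernel-verified Lean document; each statement's English description precedes it below -/
import Mathlib

section
/- Let G₁ and G₂ be groups, ▷ a left action of G₁ on G₂ by group automorphisms, and t : G₂ → G₁ a group homomorphism satisfying the Peiffer identity t(y) ▷ y' = y y' y⁻¹ for all y, y' ∈ G₂. Let (y₁, u₁), (z₁, v₁), (y₂, u₂), (z₂, v₂) ∈ G₂ × G₁ with v₁ = t(y₁) u₁ and v₂ = t(y₂) u₂ (so the vertical compositions are defined). Then the interchange law holds: ((y₁, u₁) · (z₁, v₁)) ∘ ((y₂, u₂) · (z₂, v₂)) = ((y₁, u₁) ∘ (y₂, u₂)) · ((z₁, v₁) ∘ (z₂, v₂)); explicitly, (z₁ y₁ (u₁ ▷ (z₂ y₂)), u₁ u₂) = ((z₁ (v₁ ▷ z₂)) (y₁ (u₁ ▷ y₂)), u₁ u₂). -/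
section Bigon

variable {M N : Type*}

/-- Horizontal composition `(y₁, u₁) ∘ (y₂, u₂)` of bigons, where `act` is the action `▷`. -/
def horizontalComp [Mul M] [Mul N] (act : M → N → N) (p₁ p₂ : N × M) : N × M :=
  (p₁.1 * act p₁.2 p₂.1, p₁.2 * p₂.2)

/-- Vertical composition `(y₁, u₁) · (y₂, u₂)` of bigons. It is encoded as a total operation,
meaningful only when the source `u₂` is the target `t y₁ * u₁` of the first bigon. -/
def verticalComp [Mul N] (p q : N × M) : N × M :=
  (q.1 * p.1, p.2)

variable [Mul M] [Semigroup N] {act : M → N → N} {t : N → M}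

theorem act_target_mul_eq_mul_act
    (hact_mul : ∀ (u v : M) (y : N), act (u * v) y = act u (act v y))
    (hpeiffer : ∀ y y' : N, act (t y) y' * y = y * y') (y z : N) (u : M) :
    act (t y * u) z * y = y * act u z := by
  rw [hact_mul, hpeiffer]

/-- The Peiffer identity is stated without inverses, so that it makes sense in a semigroup. -/
theorem interchange_law_general
    (hact_mul : ∀ (u v : M) (y : N), act (u * v) y = act u (act v y))
    (hact_hom : ∀ (u : M) (y y' : N), act u (y * y') = act u y * act u y')
    (hpeiffer : ∀ y y' : N, act (t y) y' * y = y * y')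
    (p₁ q₁ p₂ q₂ : N × M) (hq₁ : q₁.2 = t p₁.1 * p₁.2) :
    horizontalComp act (verticalComp p₁ q₁) (verticalComp p₂ q₂) =
      verticalComp (horizontalComp act p₁ p₂) (horizontalComp act q₁ q₂) := by
  obtain ⟨y₁, u₁⟩ := p₁
  obtain ⟨z₁, v₁⟩ := q₁
  obtain ⟨y₂, u₂⟩ := p₂
  obtain ⟨z₂, v₂⟩ := q₂
  obtain rfl : v₁ = t y₁ * u₁ := hq₁
  refine Prod.ext ?_ rfl
  calc z₁ * y₁ * act u₁ (z₂ * y₂)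
      = z₁ * (y₁ * act u₁ z₂) * act u₁ y₂ := by simp only [hact_hom, mul_assoc]
    _ = z₁ * (act (t y₁ * u₁) z₂ * y₁) * act u₁ y₂ := by
        rw [act_target_mul_eq_mul_act hact_mul hpeiffer]
    _ = z₁ * act (t y₁ * u₁) z₂ * (y₁ * act u₁ y₂) := by simp only [mul_assoc]

end Bigon

/-- The interchange law between horizontal and vertical
composition of bigons, under the Peiffer identity. -/
theorem interchange_law
    {G₁ G₂ : Type*} [Group G₁] [Group G₂]
    (act : G₁ → G₂ → G₂)
    (hact_one : ∀ y : G₂, act 1 y = y)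
    (hact_mul : ∀ (u v : G₁) (y : G₂), act (u * v) y = act u (act v y))
    (hact_hom : ∀ (u : G₁) (y y' : G₂), act u (y * y') = act u y * act u y')
    (t : G₂ →* G₁)
    (hpeiffer : ∀ y y' : G₂, act (t y) y' = y * y' * y⁻¹)
    (y₁ z₁ y₂ z₂ : G₂) (u₁ v₁ u₂ v₂ : G₁)
    (hv₁ : v₁ = t y₁ * u₁) (hv₂ : v₂ = t y₂ * u₂) :
    ((z₁ * y₁ * act u₁ (z₂ * y₂), u₁ * u₂) : G₂ × G₁)
      = ((z₁ * act v₁ z₂) * (y₁ * act u₁ y₂), u₁ * u₂) :=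
  interchange_law_general hact_mul hact_hom
    (fun y y' => by rw [hpeiffer, inv_mul_cancel_right]) (y₁, u₁) (z₁, v₁) (y₂, u₂) (z₂, v₂) hv₁
end

section
/- Let G₁ and G₂ be groups, ▷ a left action of G₁ on G₂ by group automorphisms, and t : G₂ → G₁ a group homomorphism satisfying the G₁-equivariance axiom t(u ▷ y) = u t(y) u⁻¹. Then the map ((x, h), (y, u)) ↦ ((h ▷ y) x⁻¹, t(x) h u) defines a left action of the semidirect product group G₂ ⋊ G₁ (with multiplication (x, h)(x', h') = (x (h ▷ x'), h h')) on the set G₂ × G₁: the identity (1, 1) acts trivially, and ((x, h)(x', h')) • (y, u) = (x, h) • ((x', h') • (y, u)) for all x, x' ∈ G₂, h, h' ∈ G₁, (y, u) ∈ G₂ × G₁. -/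
/-!
The gauge action is the product of two actions of `G₂ ⋊ G₁`. On `G₂` it is the affine action
`y ↦ x (h ▷ y)` conjugated by inversion, which is an action whatever `t` is. On `G₁` it is left
translation along `(x, h) ↦ t(x) h`, and equivariance of `t` is exactly what makes this map a
group homomorphism.
-/

section GaugeAction

variable {G N : Type*} [Group G] [Group N]

/-- The homomorphism `G →* MulAut N` of an action by automorphisms given as a bare function. -/
def mulAutHomOfAction (act : G → N → N) (act_one : ∀ n, act 1 n = n)
    (act_mul : ∀ g g' n, act (g * g') n = act g (act g' n))
    (act_map_mul : ∀ g n n', act g (n * n') = act g n * act g n') : G →* MulAut N :=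
  letI : MulDistribMulAction G N :=
    { smul := act
      one_smul := act_one
      mul_smul := act_mul
      smul_mul := act_map_mul
      smul_one := fun g => map_one (MonoidHom.mk' (act g) (act_map_mul g)) }
  MulDistribMulAction.toMulAut G N

variable (φ : G →* MulAut N)

/-- The affine action of `N ⋊[φ] G` on `N` conjugated by inversion: `(x, h) • y = φ h y * x⁻¹`.
It is the effect of gauge transformations on the first entry of a decorated pair. -/
abbrev invAffineAction : MulAction (N ⋊[φ] G) N where
  smul p y := φ p.right y * p.left⁻¹
  one_smul y := show φ 1 y * 1⁻¹ = y by rw [map_one, MulAut.one_apply, inv_one, mul_one]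
  mul_smul p q y := calc
    φ (p.right * q.right) y * (p.left * φ p.right q.left)⁻¹
    _ = φ p.right (φ q.right y) * (φ p.right q.left⁻¹ * p.left⁻¹) := by
      rw [map_mul, MulAut.mul_apply, mul_inv_rev, map_inv]
    _ = φ p.right (φ q.right y * q.left⁻¹) * p.left⁻¹ := by rw [map_mul, mul_assoc]

variable (t : N →* G) (equivariant : ∀ g n, t (φ g n) = g * t n * g⁻¹)

/-- The homomorphism `(x, h) ↦ t x * h` from `N ⋊[φ] G` to `G` induced by an equivariant `t`.
In a crossed module, regarded as a 2-group, it is the target map. -/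
def equivariantTargetHom : N ⋊[φ] G →* G :=
  SemidirectProduct.lift t (MonoidHom.id G) fun g => MonoidHom.ext (equivariant g)

/-- The action of `N ⋊[φ] G` on decorated pairs by combined 1- and 2-gauge transformations. -/
abbrev gaugeAction : MulAction (N ⋊[φ] G) (N × G) :=
  letI := invAffineAction φ
  letI := MulAction.compHom G (equivariantTargetHom φ t equivariant)
  Prod.mulAction

theorem gaugeAction_smul_def (p : N ⋊[φ] G) (a : N × G) :
    letI := gaugeAction φ t equivariant
    p • a = (φ p.right a.1 * p.left⁻¹, t p.left * p.right * a.2) :=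
  rfl

end GaugeAction

/-- The combined 1- and 2-gauge transformations
`(x, h) • (y, u) = ((h ▷ y) x⁻¹, t(x) h u)` define a left action of the
semidirect product `G₂ ⋊ G₁` (multiplication `(x,h)(x',h') = (x (h ▷ x'), hh')`)
on the set `G₂ × G₁`. -/
theorem gauge_transformations_form_action
    {G₁ G₂ : Type*} [Group G₁] [Group G₂]
    (act : G₁ → G₂ → G₂)
    (hact_one : ∀ y : G₂, act 1 y = y)
    (hact_mul : ∀ (u v : G₁) (y : G₂), act (u * v) y = act u (act v y))
    (hact_hom : ∀ (u : G₁) (y y' : G₂), act u (y * y') = act u y * act u y')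
    (t : G₂ →* G₁)
    (hequiv : ∀ (u : G₁) (y : G₂), t (act u y) = u * t y * u⁻¹)
    (smul : G₂ × G₁ → G₂ × G₁ → G₂ × G₁)
    (hdef : ∀ p a : G₂ × G₁,
      smul p a = (act p.2 a.1 * p.1⁻¹, t p.1 * p.2 * a.2)) :
    (∀ a : G₂ × G₁, smul ((1 : G₂), (1 : G₁)) a = a) ∧
    (∀ (x x' : G₂) (h h' : G₁) (a : G₂ × G₁),
        smul (x * act h x', h * h') a = smul (x, h) (smul (x', h') a)) := by
  let φ := mulAutHomOfAction act hact_one hact_mul hact_hom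
  let := gaugeAction φ t hequiv
  have smul_eq (p : G₂ ⋊[φ] G₁) (a : G₂ × G₁) : smul (p.left, p.right) a = p • a :=
    (hdef _ a).trans (gaugeAction_smul_def φ t hequiv p a).symm
  refine ⟨fun a => (smul_eq 1 a).trans (one_smul _ a), fun x x' h h' a => ?_⟩
  let p : G₂ ⋊[φ] G₁ := ⟨x, h⟩
  let q : G₂ ⋊[φ] G₁ := ⟨x', h'⟩
  calc smul (x * act h x', h * h') a
    _ = (p * q) • a := smul_eq (p * q) a
    _ = p • q • a := mul_smul p q a
    _ = smul (x, h) (q • a) := (smul_eq p _).symm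
    _ = smul (x, h) (smul (x', h') a) := congrArg (smul (x, h)) (smul_eq q a).symm
end
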